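/- Suppose the maximal sum of distances on S² satisfies E_{−1}(S²; N) := sup { ∑_{j≠k} |x_j − x_k| : x_1,…,x_N ∈ S² } = (4/3)·N² − (4π)^{1/2}·(√3/2)^{−1/2}·6·(−ζ(−1/2))·L_{−3}(−1/2)·N^{1/2} + o(N^{1/2}) as N → ∞, where ζ is the Riemann zeta function and L_{−3} is the analytically continued Dirichlet L-function of the nontrivial (quadratic) character mod 3. Then N^{3/4} · D_{L2,C}(S²; N) → A_2 := sqrt( (3/2) · (8π/√3)^{1/2} · (−ζ(−1/2)) · L_{−3}(−1/2) ) as N → ∞. -/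

import Mathlib

open MeasureTheory Metric Real Filter
open scoped BigOperators ENNReal NNReal RealInnerProductSpace Topology

noncomputable section

/-- Normalized uniform (surface) probability measure `σ_d` on the unit sphere
`S^d ⊂ ℝ^{d+1}`, defined as normalized `d`-dimensional Hausdorff measure. -/
def sigmaMeasure (d : ℕ) : Measure (EuclideanSpace ℝ (Fin (d + 1))) :=
  (μH[(d : ℝ)] (sphere (0 : EuclideanSpace ℝ (Fin (d + 1))) 1))⁻¹ •
    μH[(d : ℝ)].restrict (sphere (0 : EuclideanSpace ℝ (Fin (d + 1))) 1)

/-- Squared spherical cap `L²` discrepancy of the `N`-point configuration `x` on `S^d`: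
`∫_{-1}^{1} ∫_{S^d} |#{k : x_k ∈ C(y;t)}/N − σ_d(C(y;t))|² dσ_d(y) dt`. -/
def L2DiscSq (d N : ℕ) (x : Fin N → EuclideanSpace ℝ (Fin (d + 1))) : ℝ :=
  ∫ t in Set.Icc (-1 : ℝ) 1, ∫ y,
    ((Nat.card {k : Fin N // t ≤ ⟪y, x k⟫} : ℝ) / N
      - (sigmaMeasure d {z | t ≤ ⟪y, z⟫}).toReal) ^ 2 ∂ sigmaMeasure d

/-- Spherical cap `L²` discrepancy. -/
def L2Disc (d N : ℕ) (x : Fin N → EuclideanSpace ℝ (Fin (d + 1))) : ℝ :=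
  Real.sqrt (L2DiscSq d N x)

/-- Optimal (infimal) spherical cap `L²`-discrepancy over all `N`-point configurations
on `S^d`. -/
def optL2Disc (d N : ℕ) : ℝ :=
  ⨅ x : {x : Fin N → EuclideanSpace ℝ (Fin (d + 1)) //
    ∀ k, x k ∈ sphere (0 : EuclideanSpace ℝ (Fin (d + 1))) 1}, L2Disc d N x.1

/-- The maximal sum of distances `E_{−1}(S^d; N) = sup { ∑_{j≠k} |x_j − x_k| }` over all
`N`-point configurations on `S^d`. -/
def maxSumDist (d N : ℕ) : ℝ :=
  ⨆ x : {x : Fin N → EuclideanSpace ℝ (Fin (d + 1)) //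
    ∀ k, x k ∈ sphere (0 : EuclideanSpace ℝ (Fin (d + 1))) 1},
    ∑ j, ∑ k, if j ≠ k then dist (x.1 j) (x.1 k) else 0

abbrev E3 := EuclideanSpace ℝ (Fin (2 + 1))

lemma sphere_pos : 0 < μH[((2:ℕ):ℝ)] (sphere (0 : E3) 1) := by
  let p : E3 → (Fin 2 → ℝ) := fun x => ![x 0, x 1]
  have hp : LipschitzWith 1 p := by
    refine LipschitzWith.of_dist_le_mul fun x y => ?_
    simp only [NNReal.coe_one, one_mul]
    rw [dist_pi_le_iff dist_nonneg]
    intro i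
    have h : ∀ j : Fin (2+1), dist (x j) (y j) ≤ dist x y := fun j => by
      rw [dist_eq_norm, dist_eq_norm]
      exact PiLp.norm_apply_le (x - y) j
    fin_cases i
    · exact h 0
    · exact h 1
  have h1 := hp.hausdorffMeasure_image_le (d := ((2:ℕ):ℝ)) (by positivity) (sphere (0:E3) 1)
  have h2 : Set.pi Set.univ (fun _ : Fin 2 => Set.Icc (0:ℝ) (1/2)) ⊆ p '' (sphere (0:E3) 1) := by
    intro v hv
    have h0 := hv 0 trivial
    have h1 := hv 1 trivial
    simp only [Set.mem_Icc] at h0 h1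
    refine ⟨!₂[v 0, v 1, √(1 - v 0 ^ 2 - v 1 ^ 2)], ?_, ?_⟩
    · rw [mem_sphere_zero_iff_norm, EuclideanSpace.norm_eq, Real.sqrt_eq_one]
      have : 0 ≤ 1 - v 0 ^ 2 - v 1 ^ 2 := by nlinarith
      simp [Fin.sum_univ_succ, Real.sq_sqrt this]
    · ext i; fin_cases i <;> simp [p]
  have h3 : μH[((2:ℕ):ℝ)] = (volume : Measure (Fin 2 → ℝ)) := by
    have := hausdorffMeasure_pi_real (ι := Fin 2)
    simpa using this
  have h4 := measure_mono (μ := μH[((2:ℕ):ℝ)]) h2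
  have h5 : 0 < μH[((2:ℕ):ℝ)] (Set.pi Set.univ (fun _ : Fin 2 => Set.Icc (0:ℝ) (1/2))) := by
    rw [h3, volume_pi, Measure.pi_pi]
    simp
    exact pos_iff_ne_zero.2 (pow_ne_zero 2 (by simp))
  simpa using lt_of_lt_of_le h5 (h4.trans h1)

lemma sphere_fin : μH[((2:ℕ):ℝ)] (sphere (0 : E3) 1) < ⊤ := by
  let f : (Fin 2 → ℝ) → E3 := fun v => !₂[cos (v 0) * cos (v 1), cos (v 0) * sin (v 1), sin (v 0)]
  have hf : ContDiff ℝ 1 f := by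
    rw [contDiff_euclidean]
    intro i
    fin_cases i <;> simp [f] <;> fun_prop
  let B : Set (Fin 2 → ℝ) := Set.pi Set.univ (fun _ : Fin 2 => Set.Icc (-4:ℝ) 4)
  have hBc : IsCompact B := isCompact_univ_pi fun _ => isCompact_Icc
  have hBx : Convex ℝ B := convex_pi fun _ _ => convex_Icc _ _
  obtain ⟨K, hK⟩ : ∃ K, LipschitzOnWith K f B := by
    exact hf.locallyLipschitz.locallyLipschitzOn.exists_lipschitzOnWith_of_compact hBc
  have h1 := hK.hausdorffMeasure_image_le (d := ((2:ℕ):ℝ)) (by positivity)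
  have h3 : μH[((2:ℕ):ℝ)] = (volume : Measure (Fin 2 → ℝ)) := by
    have := hausdorffMeasure_pi_real (ι := Fin 2)
    simpa using this
  have h2 : sphere (0:E3) 1 ⊆ f '' B := by
    intro x hx
    rw [mem_sphere_zero_iff_norm, EuclideanSpace.norm_eq, Real.sqrt_eq_one] at hx
    simp only [Fin.sum_univ_succ, norm_eq_abs, sq_abs] at hx
    simp at hx
    let z : ℂ := ⟨x 0, x 1⟩
    have hz : ‖z‖ ^ 2 = x 0 ^ 2 + x 1 ^ 2 := by
      rw [Complex.sq_norm, Complex.normSq_apply]; simp [z]; ring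
    have hx2 : ‖z‖ = √(1 - x 2 ^ 2) := by
      rw [← Real.sqrt_sq (norm_nonneg z), hz]
      congr 1; linarith
    have hpi := Real.pi_lt_d2
    refine ⟨![arcsin (x 2), Complex.arg z], ?_, ?_⟩
    · intro i _
      fin_cases i
      · have := neg_pi_div_two_le_arcsin (x 2)
        have := arcsin_le_pi_div_two (x 2)
        constructor <;> simp <;> linarith
      · have := Complex.neg_pi_lt_arg z
        have := Complex.arg_le_pi z
        constructor <;> simp <;> linarith
    · ext i
      fin_cases i
      · simp [f, cos_arcsin, ← hx2, z]
      · simp [f, cos_arcsin, ← hx2, z]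
      · simp only [f]
        simp
        rw [sin_arcsin] <;> nlinarith [sq_nonneg (x 0), sq_nonneg (x 1)]
  refine (measure_mono h2).trans_lt (h1.trans_lt ?_)
  rw [h3]
  exact ENNReal.mul_lt_top (by simp) hBc.measure_lt_top

instance sigma_prob : IsProbabilityMeasure (sigmaMeasure 2) := by
  constructor
  simp only [sigmaMeasure, Measure.smul_apply, smul_eq_mul, Measure.restrict_apply_univ]
  exact ENNReal.inv_mul_cancel sphere_pos.ne' sphere_fin.ne

lemma sigma_ae : ∀ᵐ y ∂(sigmaMeasure 2), ‖y‖ = 1 := by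
  have : ∀ᵐ y ∂(μH[((2:ℕ):ℝ)].restrict (sphere (0:E3) 1)), y ∈ sphere (0:E3) 1 :=
    ae_restrict_mem isClosed_sphere.measurableSet
  refine (Measure.ae_smul_measure this _).mono fun y hy => by simpa using hy

lemma sigma_mp (e : E3 ≃ₗᵢ[ℝ] E3) : MeasurePreserving e (sigmaMeasure 2) (sigmaMeasure 2) := by
  unfold sigmaMeasure
  have h := (e.toIsometryEquiv.measurePreserving_hausdorffMeasure ((2:ℕ):ℝ))
  have h2 := h.restrict_preimage (s := sphere (0:E3) 1) isClosed_sphere.measurableSet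
  have h3 : e.toIsometryEquiv ⁻¹' (sphere (0:E3) 1) = sphere (0:E3) 1 := by
    ext; simp
  rw [h3] at h2
  exact MeasurePreserving.smul_measure h2 _

lemma sigma_int (e : E3 ≃ₗᵢ[ℝ] E3) (f : E3 → ℝ) :
    ∫ y, f (e y) ∂(sigmaMeasure 2) = ∫ y, f y ∂(sigmaMeasure 2) :=
  (sigma_mp e).integral_comp e.toHomeomorph.measurableEmbedding f

lemma exists_rot (u v : E3) (h : ‖u‖ = ‖v‖) : ∃ e : E3 ≃ₗᵢ[ℝ] E3, e u = v :=
  ⟨_, Submodule.reflection_sub h⟩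

/-- zonal integrals are constant -/
lemma zonal (f : ℝ → ℝ) (u v : E3) (h : ‖u‖ = ‖v‖) :
    ∫ y, f ⟪y, u⟫ ∂(sigmaMeasure 2) = ∫ y, f ⟪y, v⟫ ∂(sigmaMeasure 2) := by
  obtain ⟨e, rfl⟩ := exists_rot u v h
  rw [← sigma_int e (fun y => f ⟪y, e u⟫)]
  simp

lemma int_inner (u : E3) : ∫ y, ⟪y, u⟫ ∂(sigmaMeasure 2) = 0 := by
  have := sigma_int (LinearIsometryEquiv.neg ℝ) (fun y => ⟪y, u⟫)
  simp [integral_neg] at this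
  linarith

/-- constant: mean of |⟨y,e⟩| -/
lemma int_abs_hom (u v : E3) (hv : ‖v‖ = 1) :
    ∫ y, |⟪y, u⟫| ∂(sigmaMeasure 2) = ‖u‖ * ∫ y, |⟪y, v⟫| ∂(sigmaMeasure 2) := by
  rw [zonal (fun t => |t|) u (‖u‖ • v) (by simp [norm_smul, hv])]
  simp [inner_smul_right, abs_mul, integral_const_mul]

lemma gauss_norm : ∫ x : E3, ‖x‖ * exp (-‖x‖ ^ 2) = 2 * π := by
  rw [integral_fun_norm_addHaar volume (fun r : ℝ => r * exp (-r ^ 2))]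
  have h1 : ∫ y in Set.Ioi (0:ℝ), y ^ (Module.finrank ℝ E3 - 1) • (y * exp (-y ^ 2)) = 1 / 2 := by
    have := integral_rpow_mul_exp_neg_rpow (p := 2) (q := 3) (by norm_num) (by norm_num)
    have hG : Gamma (((3:ℝ) + 1) / 2) = 1 := by
      rw [show ((3:ℝ) + 1) / 2 = 1 + 1 by norm_num, Gamma_add_one (by norm_num), Gamma_one]; simp
    rw [hG] at this
    rw [← mul_one (1/2 : ℝ), ← this]
    refine setIntegral_congr_fun measurableSet_Ioi fun y hy => ?_
    have : Module.finrank ℝ E3 = 3 := by simp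
    simp only [this, smul_eq_mul]
    norm_num
    ring
  rw [h1]
  have h2 : volume.real (ball (0:E3) 1) = 4 / 3 * π := by
    have := EuclideanSpace.volume_ball_fin_three (0 : EuclideanSpace ℝ (Fin 3)) 1
    rw [measureReal_def]
    erw [this]
    rw [ENNReal.toReal_mul, ENNReal.toReal_ofReal (by positivity)]
    simp
    ring
  rw [h2]
  simp
  ring

lemma gauss_coord : ∫ x : E3, |x 0| * exp (-‖x‖ ^ 2) = π := by
  have h := (EuclideanSpace.volume_preserving_symm_measurableEquiv_toLp (Fin (2+1)))
  have e1 : ∫ x : E3, |x 0| * exp (-‖x‖ ^ 2) =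
      ∫ v : Fin (2+1) → ℝ, ∏ i, (if i = 0 then (fun t : ℝ => |t| * exp (- t ^ 2)) else (fun t : ℝ => exp (- t ^ 2))) (v i) := by
    rw [← h.integral_comp (MeasurableEquiv.measurableEmbedding _)]
    refine integral_congr_ae (Eventually.of_forall fun x => ?_)
    simp only [EuclideanSpace.norm_sq_eq]
    simp [Fin.prod_univ_succ, Fin.sum_univ_succ, exp_add]
    ring
  rw [e1, integral_fintype_prod_volume_eq_prod]
  have g : ∫ t : ℝ, exp (-t ^ 2) = √π := by
    have := integral_gaussian 1
    simpa using this
  have g1 : ∫ t : ℝ, |t| * exp (-t ^ 2) = 1 := by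
    have a := integral_comp_abs (f := fun t : ℝ => t * exp (-t ^ 2))
    simp only [sq_abs] at a
    rw [a]
    have := integral_rpow_mul_exp_neg_rpow (p := 2) (q := 1) (by norm_num) (by norm_num)
    norm_num at this
    rw [this]; norm_num
  simp [Fin.prod_univ_succ, g, g1]
  exact Real.sq_sqrt pi_pos.le

lemma e0_norm : ‖(EuclideanSpace.single 0 1 : E3)‖ = 1 := by simp

lemma norm_gauss_le : Integrable (fun x : E3 => ‖x‖ * exp (-‖x‖ ^ 2)) := by
  by_contra h
  have := gauss_norm
  rw [integral_undef h] at this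
  have := pi_pos
  linarith

lemma int_abs (u : E3) : ∫ y, |⟪y, u⟫| ∂(sigmaMeasure 2) = ‖u‖ / 2 := by
  have e0 := e0_norm
  set e : E3 := EuclideanSpace.single 0 1 with he
  rw [int_abs_hom u e e0]
  set c := ∫ y, |⟪y, e⟫| ∂(sigmaMeasure 2) with hc
  have L : ∫ x : E3, (∫ y, |⟪y, x⟫| * exp (-‖x‖ ^ 2) ∂(sigmaMeasure 2)) = 2 * π * c := by
    rw [← gauss_norm, ← integral_mul_const]
    congr 1; ext x
    rw [integral_mul_const, int_abs_hom x e e0, ← hc]; ring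
  have R : ∀ y : E3, ‖y‖ = 1 → ∫ x : E3, |⟪y, x⟫| * exp (-‖x‖ ^ 2) = π := by
    intro y hy
    obtain ⟨f, hf⟩ := exists_rot y e (by rw [hy, e0])
    rw [← gauss_coord, ← f.measurePreserving.integral_comp f.toHomeomorph.measurableEmbedding
      (fun x : E3 => |x 0| * exp (-‖x‖ ^ 2))]
    refine integral_congr_ae (Eventually.of_forall fun x => ?_)
    have : (f x) 0 = ⟪y, x⟫ := by
      rw [← f.inner_map_map, hf, he]
      simp [EuclideanSpace.inner_single_left]
    simp [this]
  have hI : Integrable (Function.uncurry fun (x : E3) (y : E3) => |⟪y, x⟫| * exp (-‖x‖ ^ 2))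
      ((volume : Measure E3).prod (sigmaMeasure 2)) := by
    have h1 : Integrable (fun p : E3 × E3 => ‖p.1‖ * exp (-‖p.1‖ ^ 2))
      ((volume : Measure E3).prod (sigmaMeasure 2)) := norm_gauss_le.comp_fst _
    refine h1.mono' (by apply Continuous.aestronglyMeasurable; fun_prop) ?_
    have : ∀ᵐ p ∂((volume : Measure E3).prod (sigmaMeasure 2)), ‖p.2‖ = 1 :=
      Measure.quasiMeasurePreserving_snd.ae sigma_ae
    filter_upwards [this] with p hp
    simp only [Function.uncurry, norm_mul, norm_eq_abs, abs_abs, abs_exp]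
    gcongr
    simpa [hp] using abs_real_inner_le_norm p.2 p.1
  rw [integral_integral_swap hI] at L
  rw [integral_congr_ae (g := fun _ => π) (sigma_ae.mono R)] at L
  simp at L
  have : c = 1 / 2 := by
    have := pi_pos
    field_simp
    nlinarith
  rw [this]; ring

/-- cap indicator -/
def capInd (t : ℝ) (y x : E3) : ℝ := if t ≤ ⟪y, x⟫ then 1 else 0

lemma capInd_nonneg (t : ℝ) (y x : E3) : 0 ≤ capInd t y x := by
  unfold capInd; split_ifs <;> norm_num

lemma capInd_le (t : ℝ) (y x : E3) : capInd t y x ≤ 1 := by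
  unfold capInd; split_ifs <;> norm_num

lemma capInd_meas : Measurable (fun p : ℝ × E3 × E3 => capInd p.1 p.2.1 p.2.2) := by
  unfold capInd
  refine Measurable.ite ?_ measurable_const measurable_const
  exact (isClosed_le (by fun_prop) (by fun_prop)).measurableSet

lemma capInd_meas' {α : Type*} [MeasurableSpace α] {a : α → ℝ} {b c : α → E3}
    (ha : Measurable a) (hb : Measurable b) (hc : Measurable c) :
    Measurable (fun p => capInd (a p) (b p) (c p)) :=
  capInd_meas.comp (ha.prodMk (hb.prodMk hc))

lemma bdd_int {α : Type*} [MeasurableSpace α] {μ : Measure α} [IsFiniteMeasure μ] {f : α → ℝ}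
    (hf : Measurable f) (h0 : ∀ a, 0 ≤ f a) (h1 : ∀ a, f a ≤ 1) : Integrable f μ :=
  Integrable.of_bound hf.aestronglyMeasurable 1
    (Eventually.of_forall fun a => by rw [norm_eq_abs, abs_of_nonneg (h0 a)]; exact h1 a)

def pole : E3 := EuclideanSpace.single 0 1

lemma pole_norm : ‖pole‖ = 1 := e0_norm

/-- measure of a cap of height `t` -/
def capMeas (t : ℝ) : ℝ := ∫ y, capInd t y pole ∂(sigmaMeasure 2)

lemma int_capInd (t : ℝ) (x : E3) (hx : ‖x‖ = 1) :
    ∫ y, capInd t y x ∂(sigmaMeasure 2) = capMeas t :=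
  zonal (fun s => if t ≤ s then 1 else 0) x pole (by rw [hx, pole_norm])

lemma capInd_symm (t : ℝ) (x y : E3) : capInd t y x = capInd t x y := by
  unfold capInd; rw [real_inner_comm]

lemma int_capInd' (t : ℝ) (x : E3) (hx : ‖x‖ = 1) :
    ∫ y, capInd t x y ∂(sigmaMeasure 2) = capMeas t := by
  rw [← int_capInd t x hx]; simp_rw [capInd_symm t x]

lemma sigma_cap (t : ℝ) (y : E3) (hy : ‖y‖ = 1) :
    (sigmaMeasure 2 {z | t ≤ ⟪y, z⟫}).toReal = capMeas t := by
  rw [← int_capInd' t y hy]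
  have hm : MeasurableSet {z : E3 | t ≤ ⟪y, z⟫} :=
    (isClosed_le (by fun_prop) (by fun_prop)).measurableSet
  rw [← measureReal_def, ← integral_indicator_one hm]
  rfl

lemma card_cap (N : ℕ) (x : Fin N → E3) (t : ℝ) (y : E3) :
    (Nat.card {k : Fin N // t ≤ ⟪y, x k⟫} : ℝ) = ∑ k, capInd t y (x k) := by
  classical
  rw [Nat.card_eq_fintype_card, Fintype.card_subtype]
  simp [capInd, Finset.sum_boole]

def capQ (t : ℝ) (x z : E3) : ℝ := ∫ y, capInd t y x * capInd t y z ∂(sigmaMeasure 2)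

lemma capMul_nonneg (t : ℝ) (y x z : E3) : 0 ≤ capInd t y x * capInd t y z :=
  mul_nonneg (capInd_nonneg _ _ _) (capInd_nonneg _ _ _)
lemma capMul_le (t : ℝ) (y x z : E3) : capInd t y x * capInd t y z ≤ 1 :=
  mul_le_one₀ (capInd_le _ _ _) (capInd_nonneg _ _ _) (capInd_le _ _ _)

lemma prob_int_le {f : E3 → ℝ} (h0 : ∀ a, 0 ≤ f a) (h1 : ∀ a, f a ≤ 1) :
    ∫ y, f y ∂(sigmaMeasure 2) ≤ 1 := by
  have := norm_integral_le_of_norm_le_const (μ := sigmaMeasure 2) (f := f) (C := 1)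
    (Eventually.of_forall fun a => by rw [norm_eq_abs, abs_of_nonneg (h0 a)]; exact h1 a)
  simpa using (le_abs_self _).trans this

lemma capQ_nonneg (t : ℝ) (x z : E3) : 0 ≤ capQ t x z :=
  integral_nonneg fun y => capMul_nonneg t y x z
lemma capQ_le (t : ℝ) (x z : E3) : capQ t x z ≤ 1 :=
  prob_int_le (fun y => capMul_nonneg t y x z) (fun y => capMul_le t y x z)
lemma capMeas_nonneg (t : ℝ) : 0 ≤ capMeas t :=
  integral_nonneg fun y => capInd_nonneg t y _
lemma capMeas_le (t : ℝ) : capMeas t ≤ 1 :=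
  prob_int_le (fun y => capInd_nonneg t y _) (fun y => capInd_le t y _)

lemma capMeas_meas : Measurable capMeas := by
  have : Measurable (fun p : ℝ × E3 => capInd p.1 p.2 pole) :=
    capInd_meas' measurable_fst measurable_snd measurable_const
  exact (this.stronglyMeasurable.integral_prod_right (ν := sigmaMeasure 2)).measurable

lemma capQ_meas (x : E3) : Measurable (fun p : ℝ × E3 => capQ p.1 x p.2) := by
  have : Measurable (fun p : (ℝ × E3) × E3 => capInd p.1.1 p.2 x * capInd p.1.1 p.2 p.1.2) :=
    (capInd_meas' (by fun_prop) (by fun_prop) (by fun_prop)).mul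
    (capInd_meas' (by fun_prop) (by fun_prop) (by fun_prop))
  exact (this.stronglyMeasurable.integral_prod_right (ν := sigmaMeasure 2)).measurable

lemma inner_eq (N : ℕ) (hN : 0 < N) (x : Fin N → E3) (hx : ∀ k, ‖x k‖ = 1) (t : ℝ) :
    ∫ y, ((Nat.card {k : Fin N // t ≤ ⟪y, x k⟫} : ℝ) / N
      - (sigmaMeasure 2 {z | t ≤ ⟪y, z⟫}).toReal) ^ 2 ∂ sigmaMeasure 2
    = (∑ j, ∑ k, capQ t (x j) (x k)) / N ^ 2 - capMeas t ^ 2 := by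
  have hN' : (N : ℝ) ≠ 0 := by positivity
  have h1 : ∀ᵐ y ∂(sigmaMeasure 2), ((Nat.card {k : Fin N // t ≤ ⟪y, x k⟫} : ℝ) / N
      - (sigmaMeasure 2 {z | t ≤ ⟪y, z⟫}).toReal) ^ 2
      = (∑ j, ∑ k, capInd t y (x j) * capInd t y (x k)) / N ^ 2
        - (2 * capMeas t / N) * (∑ k, capInd t y (x k)) + capMeas t ^ 2 := by
    filter_upwards [sigma_ae] with y hy
    rw [card_cap, sigma_cap t y hy, ← Finset.sum_mul_sum]
    field_simp
    ring
  rw [integral_congr_ae h1]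
  have i1 : ∀ j k, Integrable (fun y => capInd t y (x j) * capInd t y (x k)) (sigmaMeasure 2) :=
    fun j k => bdd_int ((capInd_meas' (by fun_prop) (by fun_prop) (by fun_prop)).mul
      (capInd_meas' (by fun_prop) (by fun_prop) (by fun_prop)))
      (fun y => capMul_nonneg _ _ _ _) (fun y => capMul_le _ _ _ _)
  have i2 : ∀ k, Integrable (fun y => capInd t y (x k)) (sigmaMeasure 2) :=
    fun k => bdd_int (capInd_meas' (by fun_prop) (by fun_prop) (by fun_prop))
      (fun y => capInd_nonneg _ _ _) (fun y => capInd_le _ _ _)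
  have i3 : ∀ j, Integrable (fun y => ∑ k, capInd t y (x j) * capInd t y (x k)) (sigmaMeasure 2) :=
    fun j => integrable_finsetSum _ fun k _ => i1 j k
  have i4 := integrable_finsetSum Finset.univ fun j _ => i3 j
  have i5 := integrable_finsetSum Finset.univ fun j _ => i2 j
  have i6 : Integrable (fun y => (∑ j, ∑ k, capInd t y (x j) * capInd t y (x k)) / (N:ℝ) ^ 2
        - (2 * capMeas t / N) * (∑ k, capInd t y (x k))) (sigmaMeasure 2) :=
    (i4.div_const _).sub (i5.const_mul _)
  rw [integral_add i6 (integrable_const _),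
    integral_sub (i4.div_const _) (i5.const_mul _), integral_div, integral_const_mul,
    integral_finsetSum _ (fun j _ => i3 j), integral_finsetSum _ (fun j _ => i2 j)]
  simp_rw [integral_finsetSum _ (fun k _ => i1 _ k), int_capInd t _ (hx _)]
  simp only [capQ, Finset.sum_const, Finset.card_univ, Fintype.card_fin, nsmul_eq_mul,
    integral_const, probReal_univ, smul_eq_mul, one_mul]
  field_simp
  ring

lemma capK (x z : E3) (hx : ‖x‖ = 1) (hz : ‖z‖ = 1) :
    ∫ t in Set.Icc (-1:ℝ) 1, capQ t x z = 1 - dist x z / 4 := by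
  unfold capQ
  rw [integral_integral_swap]
  swap
  · refine bdd_int (f := Function.uncurry fun t y => capInd t y x * capInd t y z)
      ((capInd_meas' (by fun_prop) (by fun_prop) (by fun_prop)).mul
      (capInd_meas' (by fun_prop) (by fun_prop) (by fun_prop)))
      (fun y => capMul_nonneg _ _ _ _) (fun y => capMul_le _ _ _ _)
  have h : ∀ᵐ y ∂(sigmaMeasure 2), ∫ t in Set.Icc (-1:ℝ) 1, capInd t y x * capInd t y z =
      1 + (⟪y, x⟫ + ⟪y, z⟫ - |⟪y, x - z⟫|) / 2 := by
    filter_upwards [sigma_ae] with y hy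
    have a1 := abs_le.1 (abs_real_inner_le_norm y x)
    have a2 := abs_le.1 (abs_real_inner_le_norm y z)
    rw [hy, hx] at a1
    rw [hy, hz] at a2
    have e : ∀ t, capInd t y x * capInd t y z
        = (Set.Iic (min ⟪y, x⟫ ⟪y, z⟫)).indicator (fun _ => (1:ℝ)) t := by
      intro t
      simp only [capInd, Set.indicator, Set.mem_Iic, le_inf_iff]
      split_ifs <;> simp_all
    simp_rw [e]
    rw [setIntegral_indicator measurableSet_Iic]
    have e2 : Set.Icc (-1:ℝ) 1 ∩ Set.Iic (min ⟪y, x⟫ ⟪y, z⟫) = Set.Icc (-1) (min ⟪y, x⟫ ⟪y, z⟫) := by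
      ext t
      simp only [Set.mem_inter_iff, Set.mem_Icc, Set.mem_Iic, le_inf_iff]
      constructor
      · rintro ⟨⟨h1, h2⟩, h3, h4⟩; exact ⟨h1, h3, h4⟩
      · rintro ⟨h1, h3, h4⟩; exact ⟨⟨h1, by linarith⟩, h3, h4⟩
    rw [e2]
    simp only [integral_const, measureReal_restrict_apply_univ, Real.volume_real_Icc, smul_eq_mul, mul_one]
    rw [max_eq_left (by have : (-1:ℝ) ≤ min ⟪y, x⟫ ⟪y, z⟫ := le_min (by linarith) (by linarith)
                        linarith), inner_sub_right]
    rcases le_total ⟪y, x⟫ ⟪y, z⟫ with h | h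
    · rw [min_eq_left h, abs_of_nonpos (by linarith)]; ring
    · rw [min_eq_right h, abs_of_nonneg (by linarith)]; ring
  rw [integral_congr_ae h]
  have bi : ∀ u : E3, Integrable (fun y => ⟪y, u⟫) (sigmaMeasure 2) := fun u =>
    Integrable.of_bound (by apply Continuous.aestronglyMeasurable; fun_prop) ‖u‖
      (sigma_ae.mono fun y hy => by simpa [hy] using norm_inner_le_norm (𝕜 := ℝ) y u)
  have b1 : Integrable (fun y => ⟪y, x⟫ + ⟪y, z⟫) (sigmaMeasure 2) := (bi x).add (bi z)
  have b2 : Integrable (fun y => ⟪y, x⟫ + ⟪y, z⟫ - |⟪y, x - z⟫|) (sigmaMeasure 2) :=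
    b1.sub (bi (x - z)).abs
  rw [integral_add (integrable_const _) (b2.div_const _),
    integral_div, integral_sub b1 (bi (x - z)).abs, integral_add (bi x) (bi z),
    int_inner, int_inner, int_abs, dist_eq_norm]
  simp
  ring

def capS : ℝ := ∫ t in Set.Icc (-1:ℝ) 1, capMeas t ^ 2

lemma L2DiscSq_eq (N : ℕ) (hN : 0 < N) (x : Fin N → E3) (hx : ∀ k, ‖x k‖ = 1) :
    L2DiscSq 2 N x = 1 - capS - (∑ j, ∑ k, dist (x j) (x k)) / (4 * N ^ 2) := by
  have hN' : (N : ℝ) ≠ 0 := by positivity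
  unfold L2DiscSq
  simp_rw [inner_eq N hN x hx]
  have i1 : ∀ j k, Integrable (fun t => capQ t (x j) (x k)) (volume.restrict (Set.Icc (-1:ℝ) 1)) :=
    fun j k => bdd_int ((capQ_meas (x j)).comp (by fun_prop : Measurable fun t : ℝ => (t, x k)))
      (fun t => capQ_nonneg _ _ _) (fun t => capQ_le _ _ _)
  have i2 : Integrable (fun t => capMeas t ^ 2) (volume.restrict (Set.Icc (-1:ℝ) 1)) :=
    bdd_int (capMeas_meas.pow_const 2) (fun t => by positivity)
      (fun t => pow_le_one₀ (capMeas_nonneg t) (capMeas_le t))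
  have i3 : ∀ j, Integrable (fun t => ∑ k, capQ t (x j) (x k)) (volume.restrict (Set.Icc (-1:ℝ) 1)) :=
    fun j => integrable_finsetSum _ fun k _ => i1 j k
  have i4 := integrable_finsetSum Finset.univ fun j _ => i3 j
  rw [integral_sub (i4.div_const _) i2, integral_div, integral_finsetSum _ (fun j _ => i3 j)]
  simp_rw [integral_finsetSum _ (fun k _ => i1 _ k), capK _ _ (hx _) (hx _)]
  simp only [Finset.sum_sub_distrib, Finset.sum_const, Finset.card_univ, Fintype.card_fin,
    nsmul_eq_mul, ← Finset.sum_div, capS]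
  field_simp
  ring

/-- mean distance -/
lemma int_dist (x : E3) (hx : ‖x‖ = 1) :
    ∫ z, dist x z ∂(sigmaMeasure 2) = 4 * (1 - capS) := by
  have i0 : Integrable (fun z => dist x z) (sigmaMeasure 2) :=
    Integrable.of_bound (by apply Continuous.aestronglyMeasurable; fun_prop) 2
      (sigma_ae.mono fun y hy => by
        rw [norm_eq_abs, abs_of_nonneg dist_nonneg, dist_eq_norm]
        have := norm_sub_le x y
        linarith)
  have h1 : ∫ z, (∫ t in Set.Icc (-1:ℝ) 1, capQ t x z) ∂(sigmaMeasure 2)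
      = 1 - (∫ z, dist x z ∂(sigmaMeasure 2)) / 4 := by
    rw [integral_congr_ae (sigma_ae.mono fun z hz => capK x z hx hz),
      integral_sub (integrable_const _) (i0.div_const _), integral_div]
    simp
  rw [integral_integral_swap] at h1
  swap
  · exact bdd_int (f := Function.uncurry fun z t => capQ t x z)
      ((capQ_meas x).comp measurable_swap) (fun p => capQ_nonneg _ _ _) (fun p => capQ_le _ _ _)
  have h2 : ∀ t, ∫ z, capQ t x z ∂(sigmaMeasure 2) = capMeas t ^ 2 := by
    intro t
    unfold capQ
    rw [integral_integral_swap]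
    swap
    · exact bdd_int (f := Function.uncurry fun z y => capInd t y x * capInd t y z)
        ((capInd_meas' (by fun_prop) (by fun_prop) (by fun_prop)).mul
        (capInd_meas' (by fun_prop) (by fun_prop) (by fun_prop)))
        (fun y => capMul_nonneg _ _ _ _) (fun y => capMul_le _ _ _ _)
    simp_rw [integral_const_mul]
    have h3 : ∀ᵐ y ∂(sigmaMeasure 2), capInd t y x * ∫ z, capInd t y z ∂(sigmaMeasure 2)
        = capInd t y x * capMeas t := sigma_ae.mono fun y hy => by rw [int_capInd' t y hy]
    rw [integral_congr_ae h3, integral_mul_const, int_capInd t x hx, sq]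
  simp_rw [h2] at h1
  change capS = _ at h1
  linarith

lemma greedy (N : ℕ) : ∃ x : Fin N → E3, (∀ k, ‖x k‖ = 1) ∧
    4 * (1 - capS) * (N * (N - 1)) ≤ ∑ j, ∑ k, dist (x j) (x k) := by
  induction N with
  | zero => exact ⟨fun k => k.elim0, fun k => k.elim0, by simp⟩
  | succ n ih =>
    obtain ⟨x, hx, h⟩ := ih
    have i0 : ∀ k, Integrable (fun z => dist (x k) z) (sigmaMeasure 2) := fun k =>
      Integrable.of_bound (by apply Continuous.aestronglyMeasurable; fun_prop) 2
        (sigma_ae.mono fun y hy => by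
          rw [norm_eq_abs, abs_of_nonneg dist_nonneg, dist_eq_norm]
          have := norm_sub_le (x k) y
          have := hx k
          linarith)
    have i1 := integrable_finsetSum Finset.univ fun k _ => i0 k
    obtain ⟨z, hz, hz2⟩ := exists_notMem_null_integral_le i1 (ae_iff.1 sigma_ae)
    simp only [Set.mem_ofPred_eq, not_not] at hz
    rw [integral_finsetSum _ fun k _ => i0 k] at hz2
    simp_rw [int_dist _ (hx _)] at hz2
    simp at hz2
    refine ⟨Fin.cons z x, ?_, ?_⟩
    · intro k
      refine Fin.cases ?_ (fun k => ?_) k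
      · simpa using hz
      · simpa using hx k
    · simp only [Fin.sum_univ_succ, Fin.cons_zero, Fin.cons_succ, dist_self, Finset.sum_add_distrib]
      simp_rw [dist_comm z]
      push_cast
      nlinarith

abbrev Conf (N : ℕ) := {x : Fin N → EuclideanSpace ℝ (Fin (2 + 1)) //
    ∀ k, x k ∈ sphere (0 : EuclideanSpace ℝ (Fin (2 + 1))) 1}

def sumD (N : ℕ) (x : Conf N) : ℝ := ∑ j, ∑ k, dist (x.1 j) (x.1 k)

instance (N : ℕ) : Nonempty (Conf N) := ⟨⟨fun _ => pole, fun _ => by simp [pole_norm]⟩⟩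

lemma maxSumDist_eq (N : ℕ) : maxSumDist 2 N = ⨆ x : Conf N, sumD N x := by
  unfold maxSumDist
  congr 1; ext x
  unfold sumD
  refine Finset.sum_congr rfl fun j _ => Finset.sum_congr rfl fun k _ => ?_
  by_cases h : j = k <;> simp [h]

lemma disc_eq (N : ℕ) (hN : 0 < N) (x : Conf N) :
    L2DiscSq 2 N x.1 = 1 - capS - sumD N x / (4 * N ^ 2) :=
  L2DiscSq_eq N hN x.1 fun k => by simpa using x.2 k

lemma sumD_le (N : ℕ) (hN : 0 < N) (x : Conf N) : sumD N x ≤ 4 * (1 - capS) * N ^ 2 := by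
  have h : 0 ≤ L2DiscSq 2 N x.1 :=
    integral_nonneg fun t => integral_nonneg fun y => sq_nonneg _
  rw [disc_eq N hN x] at h
  have hN' : (0:ℝ) < N := by positivity
  have : sumD N x / (4 * N ^ 2) ≤ 1 - capS := by linarith
  rw [div_le_iff₀ (by positivity)] at this
  linarith

lemma sumD_bdd (N : ℕ) (hN : 0 < N) : BddAbove (Set.range (sumD N)) :=
  ⟨_, by rintro _ ⟨x, rfl⟩; exact sumD_le N hN x⟩

lemma maxSumDist_le (N : ℕ) (hN : 0 < N) : maxSumDist 2 N ≤ 4 * (1 - capS) * N ^ 2 := by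
  rw [maxSumDist_eq]; exact ciSup_le fun x => sumD_le N hN x

lemma le_maxSumDist (N : ℕ) (hN : 0 < N) :
    4 * (1 - capS) * (N * (N - 1)) ≤ maxSumDist 2 N := by
  obtain ⟨x, hx, h⟩ := greedy N
  rw [maxSumDist_eq]
  exact h.trans (le_ciSup (sumD_bdd N hN) ⟨x, fun k => by simpa using hx k⟩)

lemma optL2Disc_eq (N : ℕ) (hN : 0 < N) :
    optL2Disc 2 N = √(1 - capS - maxSumDist 2 N / (4 * N ^ 2)) := by
  have hN' : (0:ℝ) < N := by positivity
  rw [maxSumDist_eq]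
  have := Antitone.map_ciSup_of_continuousAt (f := fun e : ℝ => √(1 - capS - e / (4 * N ^ 2)))
    (g := sumD N) (by apply Continuous.continuousAt; fun_prop)
    (fun a b hab => by
      apply Real.sqrt_le_sqrt
      gcongr) (sumD_bdd N hN)
  rw [this]
  unfold optL2Disc L2Disc
  congr 1; ext x
  rw [disc_eq N hN x]

lemma const_eq (z l : ℝ) :
    ((4 * π) ^ ((1 : ℝ) / 2) * (Real.sqrt 3 / 2) ^ (-(1 : ℝ) / 2) * 6 * (-z) * l) / 4
      = (3 / 2) * (8 * π / Real.sqrt 3) ^ ((1 : ℝ) / 2) * (-z) * l := by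
  have h : (8 * π / Real.sqrt 3) ^ ((1 : ℝ) / 2)
      = (4 * π) ^ ((1 : ℝ) / 2) * (Real.sqrt 3 / 2) ^ (-(1 : ℝ) / 2) := by
    rw [neg_div, Real.rpow_neg (by positivity), ← Real.inv_rpow (by positivity),
      ← Real.mul_rpow (by positivity) (by positivity)]
    congr 1
    field_simp
    norm_num
  rw [h]; ring

lemma main_aux (C : ℝ)
    (hE : (fun N : ℕ => maxSumDist 2 N - ((4 / 3) * (N : ℝ) ^ 2 - C * (N : ℝ) ^ ((1 : ℝ) / 2)))
        =o[atTop] fun N : ℕ => (N : ℝ) ^ ((1 : ℝ) / 2)) :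
    Tendsto (fun N : ℕ => (N : ℝ) ^ ((3 : ℝ) / 4) * optL2Disc 2 N) atTop (𝓝 (√(C / 4))) := by
  have hr := hE.tendsto_div_nhds_zero
  set r : ℕ → ℝ := fun N => (maxSumDist 2 N - ((4 / 3) * (N : ℝ) ^ 2 - C * (N : ℝ) ^ ((1 : ℝ) / 2)))
    / (N : ℝ) ^ ((1 : ℝ) / 2) with hrdef
  have key : ∀ N : ℕ, 0 < N →
      maxSumDist 2 N / N ^ 2 = 4 / 3 + (r N - C) * (N : ℝ) ^ (-(3 : ℝ) / 2) := by
    intro N hN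
    have hN' : (0:ℝ) < N := by positivity
    have hs : (0:ℝ) < (N : ℝ) ^ ((1 : ℝ) / 2) := by positivity
    have e : (N : ℝ) ^ (-(3 : ℝ) / 2) = (N : ℝ) ^ ((1 : ℝ) / 2) / N ^ 2 := by
      rw [← Real.rpow_natCast, ← Real.rpow_sub hN']; norm_num
    rw [e]
    simp only [hrdef]
    field_simp
    ring
  have hpow : Tendsto (fun N : ℕ => (N : ℝ) ^ (-(3 : ℝ) / 2)) atTop (𝓝 0) := by
    have := (tendsto_rpow_neg_atTop (y := (3:ℝ)/2) (by norm_num)).comp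
      (tendsto_natCast_atTop_atTop (R := ℝ))
    simpa [Function.comp_def, neg_div] using this
  have l1 : Tendsto (fun N : ℕ => maxSumDist 2 N / N ^ 2) atTop (𝓝 (4 / 3)) := by
    have : Tendsto (fun N : ℕ => 4 / 3 + (r N - C) * (N : ℝ) ^ (-(3 : ℝ) / 2)) atTop
        (𝓝 (4 / 3 + (0 - C) * 0)) := ((hr.sub_const C).mul hpow).const_add _
    simp only [mul_zero, add_zero] at this
    refine this.congr' ?_
    filter_upwards [eventually_gt_atTop 0] with N hN
    rw [key N hN]
  have l2 : Tendsto (fun N : ℕ => maxSumDist 2 N / N ^ 2) atTop (𝓝 (4 * (1 - capS))) := by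
    have h0 : Tendsto (fun N : ℕ => 4 * (1 - capS) * (1 - (N:ℝ)⁻¹)) atTop
        (𝓝 (4 * (1 - capS) * (1 - 0))) :=
      ((tendsto_inv_atTop_nhds_zero_nat (𝕜 := ℝ)).const_sub 1).const_mul _
    simp only [sub_zero, mul_one] at h0
    refine tendsto_of_tendsto_of_tendsto_of_le_of_le' h0 tendsto_const_nhds ?_ ?_
    · filter_upwards [eventually_gt_atTop 0] with N hN
      have hN' : (0:ℝ) < N := by positivity
      rw [le_div_iff₀ (by positivity)]
      refine le_trans (le_of_eq ?_) (le_maxSumDist N hN)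
      field_simp
    · filter_upwards [eventually_gt_atTop 0] with N hN
      have hN' : (0:ℝ) < N := by positivity
      rw [div_le_iff₀ (by positivity)]
      exact maxSumDist_le N hN
  have hS := tendsto_nhds_unique l1 l2
  have lim : Tendsto (fun N : ℕ => √((C - r N) / 4)) atTop (𝓝 (√((C - 0) / 4))) :=
    ((hr.const_sub C).div_const 4).sqrt
  rw [sub_zero] at lim
  refine lim.congr' ?_
  filter_upwards [eventually_gt_atTop 0] with N hN
  have hN' : (0:ℝ) < N := by positivity
  have e1 : (N : ℝ) ^ ((3 : ℝ) / 4) = √((N : ℝ) ^ ((3 : ℝ) / 2)) := by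
    rw [Real.sqrt_eq_rpow, ← Real.rpow_mul hN'.le]; norm_num
  rw [optL2Disc_eq N hN, e1, ← Real.sqrt_mul (by positivity)]
  congr 1
  have e2 : maxSumDist 2 N / (4 * N ^ 2) = (maxSumDist 2 N / N ^ 2) / 4 := by
    field_simp
  have e3 : (N : ℝ) ^ ((3 : ℝ) / 2) * (N : ℝ) ^ (-(3 : ℝ) / 2) = 1 := by
    rw [← Real.rpow_add hN']; norm_num
  rw [e2, key N hN, show 1 - capS = 1 / 3 by linarith]
  linear_combination (-(C - r N) / 4) * e3

/-- If the maximal sum of distances on `S²` satisfies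
`E_{−1}(S²;N) = (4/3)N² − (4π)^{1/2} (√3/2)^{−1/2} 6 (−ζ(−1/2)) L_{−3}(−1/2) N^{1/2} + o(N^{1/2})`,
then `N^{3/4} · D_{L2,C}(S²;N) → A₂ = sqrt((3/2)(8π/√3)^{1/2}(−ζ(−1/2)) L_{−3}(−1/2))`.
Here `ζ` is the Riemann zeta function and `L_{−3}` is the (analytically continued)
Dirichlet L-function of the nontrivial character mod 3; `zval` and `lval` are their
(real) values at `−1/2`. -/
theorem optL2Disc_S2_tendsto_of_energy_asymptotics
    (χ : DirichletCharacter ℂ 3) (hχ : χ ≠ 1) (zval lval : ℝ)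
    (hz : (zval : ℂ) = riemannZeta (-1 / 2 : ℂ))
    (hl : (lval : ℂ) = DirichletCharacter.LFunction χ (-1 / 2 : ℂ))
    (hE : (fun N : ℕ => maxSumDist 2 N -
        ((4 / 3) * (N : ℝ) ^ 2 -
          (4 * π) ^ ((1 : ℝ) / 2) * (Real.sqrt 3 / 2) ^ (-(1 : ℝ) / 2) * 6 * (-zval) * lval
            * (N : ℝ) ^ ((1 : ℝ) / 2)))
        =o[atTop] fun N : ℕ => (N : ℝ) ^ ((1 : ℝ) / 2)) :
    Tendsto (fun N : ℕ => (N : ℝ) ^ ((3 : ℝ) / 4) * optL2Disc 2 N) atTop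
      (𝓝 (Real.sqrt ((3 / 2) * (8 * π / Real.sqrt 3) ^ ((1 : ℝ) / 2) * (-zval) * lval))) := by
  rw [← const_eq zval lval]
  exact main_aux _ hE
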